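/- arXiv:1107.4838 — 3 statements merged into one kernel-verified Lean document; each statement's English description precedes it below -/
import Mathlib

section
/- Under Assumption 1, for every ε ∈ (0,1) the PHPIP Markov chain P^ε on B is aperiodic: every state (a,a) ∈ diag(A) has a positive-probability self-loop (hence period 1), and every state (a⁰,a¹) ∈ B ∖ diag(A) admits both a positive-probability cycle of length 2, namely (a⁰,a¹) → (a¹,a⁰) → (a⁰,a¹), and a positive-probability cycle of length 3, namely (a⁰,a¹) → (a¹,a¹) → (a¹,a⁰) → (a⁰,a¹), so that its period is 1. -/
/-!
A transition of PHPIP has positive probability as soon as every agent makes its own move with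
positive probability, so everything reduces to three kinds of individual moves.

* Staying at the current action (`agentProb_stay_pos`) has probability at least `1 - ε` if the
  utility did not drop, and at least `(1 - ε) κ ε ^ Δ` otherwise.
* Exploring a feasible action after the utility did not drop (`agentProb_of_le_pos`) has probability
  at least `ε / |R_i(a_i) \ {a_i}|`.
* Returning to the previous action (`agentProb_return_pos`) is, by reversibility, an exploratory
  move if the utility did not drop; otherwise it has probability at least
  `(1 - ε) (1 - κ ε ^ Δ)`, which is positive because `κ ≤ 1 / 2` and `ε ^ Δ ≤ 1`.

The bound `1 / (C - 1) < κ` is used only through `0 < κ`: `C ≥ 3` as soon as there is an agent with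
an available action.
-/

open Finset Filter Topology
open scoped Classical

namespace PIPIPGame

variable {n : ℕ}

section Defs

variable (A : Fin n → Type) [∀ i, Fintype (A i)] [∀ i, DecidableEq (A i)]
  (U : Fin n → (∀ i, A i) → ℝ) (R : ∀ i, A i → Finset (A i))

/-- Assumption 1: reversibility, feasibility, and at least three available actions. -/
def Assumption1 : Prop :=
  (∀ (i : Fin n) (a b : A i), b ∈ R i a ↔ a ∈ R i b) ∧
  (∀ (i : Fin n) (a b : A i), Relation.ReflTransGen (fun x y => y ∈ R i x) a b) ∧
  (∀ (i : Fin n) (a : A i), 3 ≤ (R i a).card)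

/-- Assumption 2: unilateral feasible deviations change the utility by less than 1. -/
def Assumption2 : Prop :=
  ∀ (i : Fin n) (a a' : ∀ j, A j), a' i ∈ R i (a i) → (∀ j, j ≠ i → a' j = a j) →
    U i a' - U i a < 1

/-- `φ` is a potential function for the constrained game. -/
def IsPotential (φ : (∀ j, A j) → ℝ) : Prop :=
  ∀ (i : Fin n) (a a' : ∀ j, A j), a' i ∈ R i (a i) → (∀ j, j ≠ i → a' j = a j) →
    U i a' - U i a = φ a' - φ a

/-- `C = max_i max_{a_i} |R_i(a_i)|`. -/
noncomputable def Cmax : ℕ :=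
  Finset.univ.sup fun i : Fin n => Finset.univ.sup fun a : A i => (R i a).card

/-- Membership in the state space B. -/
def InB (z : (∀ j, A j) × (∀ j, A j)) : Prop := ∀ i, z.2 i ∈ R i (z.1 i)

/-- The probability that agent `i` chooses `b` under PHPIP with exploration rate `ε`
and parameter `κ`, the previous two joint actions being `a0, a1`. -/
noncomputable def agentProb (ε κ : ℝ) (a0 a1 : ∀ j, A j) (i : Fin n) (b : A i) : ℝ :=
  if U i a0 ≤ U i a1 then
    (if b = a1 i then 1 - ε else 0)
    + (if b ∈ R i (a1 i) \ {a1 i} then ε / ((R i (a1 i) \ {a1 i}).card : ℝ) else 0)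
  else
    (if b = a1 i then (1 - ε) * (κ * ε ^ (U i a0 - U i a1)) else 0)
    + (if b = a0 i then (1 - ε) * (1 - κ * ε ^ (U i a0 - U i a1)) else 0)
    + (if b ∈ R i (a1 i) \ {a0 i, a1 i} then
        ε / ((R i (a1 i) \ {a0 i, a1 i}).card : ℝ) else 0)

/-- One-step transition probability of the PHPIP chain on pairs of joint actions. -/
noncomputable def transP (ε κ : ℝ) (z z' : (∀ j, A j) × (∀ j, A j)) : ℝ :=
  if z'.1 = z.2 then ∏ i, agentProb A U R ε κ z.1 z.2 i (z'.2 i) else 0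

/-- Probability of a path (a list of states) as a product of step transition probabilities. -/
noncomputable def pathProb (ε κ : ℝ) (l : List ((∀ j, A j) × (∀ j, A j))) : ℝ :=
  ((l.zip l.tail).map fun p => transP A U R ε κ p.1 p.2).prod

/-- `l` is a positive-probability path of the family `{P^ε}` from `z` to `z'`. -/
def IsPath (κ : ℝ) (z z' : (∀ j, A j) × (∀ j, A j))
    (l : List ((∀ j, A j) × (∀ j, A j))) : Prop :=
  l.head? = some z ∧ l.getLast? = some z' ∧
  l.Chain' (fun x y => ∃ ε, ε ∈ Set.Ioo (0 : ℝ) 1 ∧ 0 < transP A U R ε κ x y)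

/-- `lam` is the resistance of the path `l`: `P^ε(l)/ε^lam` tends to a positive limit
as `ε → 0+`. -/
def HasResistance (κ : ℝ) (l : List ((∀ j, A j) × (∀ j, A j))) (lam : ℝ) : Prop :=
  0 ≤ lam ∧ ∃ L : ℝ, 0 < L ∧
    Tendsto (fun ε : ℝ => pathProb A U R ε κ l / ε ^ lam) (𝓝[>] (0 : ℝ)) (𝓝 L)

/-- Accessibility by positive-probability transitions of `P^ε`. -/
def Accessible (ε κ : ℝ) (x y : (∀ j, A j) × (∀ j, A j)) : Prop :=
  Relation.ReflTransGen (fun u v => 0 < transP A U R ε κ u v) x y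

/-- A recurrent communication class of `P^ε` (contained in the state space B). -/
def IsRecurrentClass (ε κ : ℝ) (S : Set ((∀ j, A j) × (∀ j, A j))) : Prop :=
  S.Nonempty ∧ (∀ x ∈ S, InB A R x) ∧
  (∀ x ∈ S, ∀ y ∈ S, Accessible A U R ε κ x y) ∧
  (∀ x ∈ S, ∀ y, Accessible A U R ε κ x y → y ∈ S)

/-- `m`-step transition probability of `P^ε` on B. -/
noncomputable def mstep (ε κ : ℝ) : ℕ → ((∀ j, A j) × (∀ j, A j)) → ((∀ j, A j) × (∀ j, A j)) → ℝ
  | 0, z, z' => if z = z' then 1 else 0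
  | (m+1), z, z' => ∑ y ∈ Finset.univ.filter (InB A R),
      mstep ε κ m z y * transP A U R ε κ y z'

/-- `(a, a')` is an edge of `E_single`: exactly one agent changes its action,
and the change is feasible. -/
def ESingle (a a' : ∀ j, A j) : Prop :=
  ∃ i : Fin n, a' i ≠ a i ∧ a' i ∈ R i (a i) ∧ ∀ j, j ≠ i → a' j = a j

/-- Agent `i` can go from `a` to `b` in exactly `k` feasible steps. -/
def reachesIn (i : Fin n) : ℕ → A i → A i → Prop
  | 0, a, b => a = b
  | (k+1), a, b => ∃ c ∈ R i a, reachesIn i k c b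

/-- The minimal number of steps needed by agent `i` to move from `a` to `b`. -/
noncomputable def minSteps (i : Fin n) (a b : A i) : ℕ :=
  sInf {k : ℕ | reachesIn A R i k a b}

/-- `D = max_i D_i`. -/
noncomputable def Dmax : ℕ :=
  Finset.univ.sup fun i : Fin n =>
    Finset.univ.sup fun p : A i × A i => minSteps A R i p.1 p.2

/-- The PIPIP exploration rate `ε(t) = t^{-1/(n(D+1))}`. -/
noncomputable def epsRate (t : ℕ) : ℝ :=
  (t : ℝ) ^ (-(1 : ℝ) / (n * (Dmax A R + 1)))

end Defs

end PIPIPGame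

open PIPIPGame Finset Filter Topology

section AgentMoves

variable {n : ℕ} {A : Fin n → Type} [∀ i, Fintype (A i)] [∀ i, DecidableEq (A i)]
  {U : Fin n → (∀ i, A i) → ℝ} {R : ∀ i, A i → Finset (A i)} {ε κ : ℝ}

/-- Without a drop in utility, every feasible action, the current one included, is chosen with
positive probability. -/
lemma agentProb_of_le_pos (hε : 0 < ε) (hε1 : ε < 1) {a0 a1 : ∀ j, A j} {i : Fin n}
    (hU : U i a0 ≤ U i a1) {b : A i} (hb : b ∈ R i (a1 i)) :
    0 < agentProb A U R ε κ a0 a1 i b := by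
  unfold agentProb
  rw [if_pos hU]
  by_cases h : b = a1 i
  · rw [if_pos h]
    refine add_pos_of_pos_of_nonneg (by linarith) ?_
    split_ifs <;> positivity
  · have hmem : b ∈ R i (a1 i) \ {a1 i} := by simp [h, hb]
    have hcard : (0 : ℝ) < ((R i (a1 i) \ {a1 i}).card : ℝ) := by
      exact_mod_cast Finset.card_pos.mpr ⟨b, hmem⟩
    rw [if_neg h, if_pos hmem]
    positivity

/-- After a drop in utility, an agent that does not explore keeps its current action with
conditional probability `κ ε ^ Δ`, hence returns to the previous one with positive probability. -/
lemma kappa_mul_rpow_lt_one (hε : 0 < ε) (hε1 : ε < 1) (hκ : κ ≤ 1 / 2) {d : ℝ} (hd : 0 ≤ d) :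
    κ * ε ^ d < 1 := by
  have h1 : ε ^ d ≤ 1 := Real.rpow_le_one hε.le hε1.le hd
  have h0 : 0 < ε ^ d := Real.rpow_pos_of_pos hε d
  nlinarith

lemma agentProb_stay_pos (hε : 0 < ε) (hε1 : ε < 1) (hκ0 : 0 < κ) (hκ : κ ≤ 1 / 2)
    (a0 a1 : ∀ j, A j) (i : Fin n) (hb : a1 i ∈ R i (a1 i)) :
    0 < agentProb A U R ε κ a0 a1 i (a1 i) := by
  by_cases hU : U i a0 ≤ U i a1
  · exact agentProb_of_le_pos hε hε1 hU hb
  · have hlt := kappa_mul_rpow_lt_one hε hε1 hκ (sub_nonneg.mpr (not_le.mp hU).le)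
    have h0 : 0 < ε ^ (U i a0 - U i a1) := Real.rpow_pos_of_pos hε _
    have he : 0 < 1 - ε := by linarith
    have hs : 0 ≤ (1 - ε) * (1 - κ * ε ^ (U i a0 - U i a1)) :=
      mul_nonneg he.le (by linarith)
    unfold agentProb
    rw [if_neg hU, if_pos rfl]
    refine add_pos_of_pos_of_nonneg (add_pos_of_pos_of_nonneg (by positivity) ?_) ?_
    · split_ifs
      exacts [hs, le_rfl]
    · split_ifs <;> positivity

lemma agentProb_return_pos (hε : 0 < ε) (hε1 : ε < 1) (hκ0 : 0 < κ) (hκ : κ ≤ 1 / 2)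
    (a0 a1 : ∀ j, A j) (i : Fin n) (hb : a0 i ∈ R i (a1 i)) :
    0 < agentProb A U R ε κ a0 a1 i (a0 i) := by
  by_cases hU : U i a0 ≤ U i a1
  · exact agentProb_of_le_pos hε hε1 hU hb
  · have hlt := kappa_mul_rpow_lt_one hε hε1 hκ (sub_nonneg.mpr (not_le.mp hU).le)
    have h0 : 0 < ε ^ (U i a0 - U i a1) := Real.rpow_pos_of_pos hε _
    have he : 0 < 1 - ε := by linarith
    have hs : 0 < (1 - ε) * (1 - κ * ε ^ (U i a0 - U i a1)) :=
      mul_pos he (by linarith)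
    unfold agentProb
    rw [if_neg hU, if_pos (rfl : a0 i = a0 i)]
    refine add_pos_of_pos_of_nonneg (add_pos_of_nonneg_of_pos ?_ hs) ?_
    · split_ifs <;> positivity
    · split_ifs <;> positivity

lemma transP_pos {a0 a1 a2 : ∀ j, A j}
    (h : ∀ i, 0 < agentProb A U R ε κ a0 a1 i (a2 i)) :
    0 < transP A U R ε κ (a0, a1) (a1, a2) := by
  unfold transP
  rw [if_pos rfl]
  exact Finset.prod_pos fun i _ => h i

/-- An agent with an action available forces `3 ≤ C`, so that `1 / (C - 1)` is a genuine quotient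
of positive numbers. -/
lemma kappa_pos (h1 : Assumption1 A R) (hκ : 1 / ((Cmax A R : ℝ) - 1) < κ)
    (i : Fin n) (a : A i) : 0 < κ := by
  have hC : (R i a).card ≤ Cmax A R :=
    (Finset.le_sup (f := fun a : A i => (R i a).card) (Finset.mem_univ a)).trans
      (Finset.le_sup (f := fun i : Fin n => Finset.univ.sup fun a : A i => (R i a).card)
        (Finset.mem_univ i))
  have h3 : (3 : ℝ) ≤ (Cmax A R : ℝ) := by exact_mod_cast (h1.2.2 i a).trans hC
  exact lt_trans (one_div_pos.mpr (by linarith)) hκ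

end AgentMoves

/-- **Aperiodicity of PHPIP.** Under Assumption 1, for every `ε ∈ (0,1)`: every
diagonal state `(a,a)` has a positive-probability self-loop, and every off-diagonal
state `(a⁰,a¹) ∈ B` admits the positive-probability cycle of length 2
`(a⁰,a¹) → (a¹,a⁰) → (a⁰,a¹)` and the positive-probability cycle of length 3
`(a⁰,a¹) → (a¹,a¹) → (a¹,a⁰) → (a⁰,a¹)`, so its period is 1. -/
theorem phpip_aperiodic
    {n : ℕ} (A : Fin n → Type) [∀ i, Fintype (A i)] [∀ i, DecidableEq (A i)]
    (U : Fin n → (∀ i, A i) → ℝ) (R : ∀ i, A i → Finset (A i)) (κ : ℝ)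
    (hrefl : ∀ i a, a ∈ R i a)
    (h1 : Assumption1 A R)
    (hκ : 1 / ((Cmax A R : ℝ) - 1) < κ ∧ κ ≤ 1 / 2)
    (ε : ℝ) (hε : 0 < ε) (hε1 : ε < 1) :
    (∀ a : ∀ i, A i, 0 < transP A U R ε κ (a, a) (a, a)) ∧
    (∀ a0 a1 : ∀ i, A i, InB A R (a0, a1) → a0 ≠ a1 →
      -- the cycle of length 2
      (0 < transP A U R ε κ (a0, a1) (a1, a0) ∧
       0 < transP A U R ε κ (a1, a0) (a0, a1)) ∧
      -- the cycle of length 3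
      (0 < transP A U R ε κ (a0, a1) (a1, a1) ∧
       0 < transP A U R ε κ (a1, a1) (a1, a0) ∧
       0 < transP A U R ε κ (a1, a0) (a0, a1))) := by
  obtain ⟨hκl, hκ2⟩ := hκ
  have stay (a b : ∀ i, A i) : 0 < transP A U R ε κ (a, b) (b, b) :=
    transP_pos fun i =>
      agentProb_stay_pos hε hε1 (kappa_pos h1 hκl i (a i)) hκ2 a b i (hrefl i (b i))
  have back (a b : ∀ i, A i) (hab : ∀ i, a i ∈ R i (b i)) :
      0 < transP A U R ε κ (a, b) (b, a) :=
    transP_pos fun i =>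
      agentProb_return_pos hε hε1 (kappa_pos h1 hκl i (a i)) hκ2 a b i (hab i)
  refine ⟨fun a => stay a a, fun a0 a1 hB _ => ?_⟩
  have hfwd : ∀ i, a1 i ∈ R i (a0 i) := hB
  have hrev : ∀ i, a0 i ∈ R i (a1 i) := fun i => (h1.1 i (a0 i) (a1 i)).mp (hfwd i)
  have explore : 0 < transP A U R ε κ (a1, a1) (a1, a0) :=
    transP_pos fun i => agentProb_of_le_pos hε hε1 le_rfl (hrev i)
  exact ⟨⟨back a0 a1 hrev, back a1 a0 hfwd⟩, stay a0 a1, explore, back a1 a0 hfwd⟩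
end

section
/- For the unperturbed chain {P⁰} associated with PHPIP applied to a constrained potential game Γ, no state in B ∖ diag(A) belongs to a recurrent communication class; equivalently, from every state (a⁰,a¹) with a⁰ ≠ a¹ the unperturbed process reaches diag(A) and never returns to (a⁰,a¹) along some positive-probability trajectory, so every such state is transient. -/
open Finset Filter Topology
open scoped Classical

open PIPIPGame Finset Filter Topology

/-!
At `ε = 0` the chain is deterministic: from `(a⁰, a¹)` every agent either keeps `a¹ᵢ` or returns
to `a⁰ᵢ`. An agent with `a⁰ᵢ = a¹ᵢ` never moves again, so the set of agents whose two coordinates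
differ can only shrink. If it stays the same over one step, then every agent in it has returned,
so all of them strictly preferred `a⁰` to `a¹`; the new state is `(a¹, a⁰)`, from which all of them
keep `a⁰`, and the set becomes empty. Hence `2 * #moving`, plus one if some moving agent is about
to return, strictly decreases off the diagonal (`rank_next_lt`). The trajectory therefore reaches
the diagonal without repeating a state, and since diagonal states are absorbing
(`eq_of_transP_diag_pos`), an off-diagonal state cannot lie in a recurrent communication class.
-/

namespace PIPIPGame

variable {n : ℕ} (A : Fin n → Type) [∀ i, Fintype (A i)] [∀ i, DecidableEq (A i)]
  (U : Fin n → (∀ i, A i) → ℝ) (R : ∀ i, A i → Finset (A i))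

/-- The deterministic successor of a state under the unperturbed chain. -/
noncomputable def next (z : (∀ j, A j) × (∀ j, A j)) : (∀ j, A j) × (∀ j, A j) :=
  (z.2, fun i => if U i z.1 ≤ U i z.2 then z.2 i else z.1 i)

/-- The agents whose last two actions differ. -/
noncomputable def moving (z : (∀ j, A j) × (∀ j, A j)) : Finset (Fin n) :=
  Finset.univ.filter fun i => z.1 i ≠ z.2 i

/-- A strictly decreasing quantity along off-diagonal states of the unperturbed chain: twice the
number of moving agents, plus one if some moving agent returns in the next step. -/
noncomputable def rank (z : (∀ j, A j) × (∀ j, A j)) : ℕ :=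
  2 * (moving A z).card + if ∃ i ∈ moving A z, U i z.2 < U i z.1 then 1 else 0

lemma transP_next_pos (κ : ℝ) (z : (∀ j, A j) × (∀ j, A j)) :
    0 < transP A U R 0 κ z (next A U z) := by
  unfold transP
  rw [if_pos (show (next A U z).1 = z.2 from rfl)]
  refine Finset.prod_pos fun i _ => ?_
  by_cases h : U i z.1 ≤ U i z.2
  · simp [agentProb, next, h]
  · -- the exponent is nonzero here, so the `κ`-term vanishes and returning has probability one
    have h0 : (0 : ℝ) ^ (U i z.1 - U i z.2) = 0 :=
      Real.zero_rpow (by linarith [not_le.1 h])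
    simp [agentProb, next, h, h0]

lemma mem_moving (z : (∀ j, A j) × (∀ j, A j)) (i : Fin n) :
    i ∈ moving A z ↔ z.1 i ≠ z.2 i := by
  simp [moving]

lemma moving_next_subset (z : (∀ j, A j) × (∀ j, A j)) :
    moving A (next A U z) ⊆ moving A z := by
  intro i hi
  rw [mem_moving] at hi ⊢
  intro h
  apply hi
  simp only [next]
  split_ifs
  · rfl
  · exact h.symm

lemma rank_next_lt (z : (∀ j, A j) × (∀ j, A j)) (hz : z.1 ≠ z.2) :
    rank A U (next A U z) < rank A U z := by
  rcases (moving_next_subset A U z).eq_or_ssubset with h | h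
  · -- every moving agent has returned, so the flag drops from one to zero
    have hret : ∀ i ∈ moving A z, U i z.2 < U i z.1 := by
      intro i hi
      rw [← h, mem_moving] at hi
      by_contra hle
      simp [next, not_lt.1 hle] at hi
    have hsnd : (next A U z).2 = z.1 := by
      funext i
      by_cases hi : i ∈ moving A z
      · simp [next, hret i hi]
      · have hi' : z.1 i = z.2 i := by simpa [mem_moving] using hi
        simp [next, hi']
    obtain ⟨i, hi⟩ := Function.ne_iff.1 hz
    have hi : i ∈ moving A z := (mem_moving A z i).2 hi
    have h1 : ∃ i ∈ moving A z, U i z.2 < U i z.1 := ⟨i, hi, hret i hi⟩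
    have h2 : ¬ ∃ i ∈ moving A z, U i (next A U z).2 < U i (next A U z).1 := by
      rintro ⟨j, hj, hlt⟩
      rw [hsnd] at hlt
      exact lt_asymm hlt (hret j hj)
    unfold rank
    rw [h, if_pos h1, if_neg h2]
    omega
  · have := Finset.card_lt_card h
    unfold rank
    split_ifs <;> omega

/-- The trajectory of a state reaches the diagonal; the rank bound says in particular that the
starting state is not visited again. -/
lemma exists_path_to_diag (κ : ℝ) (z : (∀ j, A j) × (∀ j, A j)) :
    ∃ (t : List ((∀ j, A j) × (∀ j, A j))) (a : ∀ j, A j),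
      (z :: t).IsChain (fun x y => 0 < transP A U R 0 κ x y) ∧
      (z :: t).getLast? = some (a, a) ∧
      Accessible A U R 0 κ z (a, a) ∧
      ∀ y ∈ t, rank A U y < rank A U z := by
  induction hk : rank A U z using Nat.strong_induction_on generalizing z with
  | _ k ih =>
    subst hk
    by_cases hz : z.1 = z.2
    · have hz' : z = (z.2, z.2) := Prod.ext hz rfl
      refine ⟨[], z.2, by simp, by simpa using hz', ?_, by simp⟩
      rw [← hz']
      exact Relation.ReflTransGen.refl
    · have hlt := rank_next_lt A U z hz
      obtain ⟨t, a, hc, hl, hacc, ht⟩ := ih _ hlt _ rfl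
      have hp := transP_next_pos A U R κ z
      refine ⟨next A U z :: t, a, List.IsChain.cons_cons hp hc, ?_, hacc.head hp, ?_⟩
      · rw [List.getLast?_cons_cons]
        exact hl
      · intro y hy
        rcases List.mem_cons.1 hy with rfl | hy
        · exact hlt
        · exact (ht y hy).trans hlt

lemma eq_of_transP_diag_pos (κ : ℝ) (a : ∀ j, A j) (y : (∀ j, A j) × (∀ j, A j))
    (h : 0 < transP A U R 0 κ (a, a) y) : y = (a, a) := by
  unfold transP at h
  split_ifs at h with h1
  · refine Prod.ext h1 (funext fun i => ?_)
    by_contra hi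
    refine h.ne' (Finset.prod_eq_zero (Finset.mem_univ i) ?_)
    have hi : ¬ y.2 i = a i := hi
    simp [agentProb, hi]
  · exact absurd h (lt_irrefl _)

lemma eq_of_accessible_diag (κ : ℝ) (a : ∀ j, A j) (y : (∀ j, A j) × (∀ j, A j))
    (h : Accessible A U R 0 κ (a, a) y) : y = (a, a) := by
  induction h with
  | refl => rfl
  | tail _ hs ih =>
    subst ih
    exact eq_of_transP_diag_pos A U R κ a _ hs

end PIPIPGame

/-- **Off-diagonal states are transient for the unperturbed chain.** For the
unperturbed chain `P⁰` (PHPIP at `ε = 0`) of a constrained potential game, no state of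
`B ∖ diag(A)` belongs to a recurrent communication class: from every `(a⁰,a¹) ∈ B` with
`a⁰ ≠ a¹` there is a positive-probability trajectory that reaches `diag(A)` without
returning to `(a⁰,a¹)`, and `(a⁰,a¹)` lies in no recurrent communication class. -/
theorem unperturbed_offdiagonal_states_transient
    {n : ℕ} (A : Fin n → Type) [∀ i, Fintype (A i)] [∀ i, DecidableEq (A i)]
    (U : Fin n → (∀ i, A i) → ℝ) (R : ∀ i, A i → Finset (A i))
    (φ : (∀ i, A i) → ℝ) (κ : ℝ)
    (hrefl : ∀ i a, a ∈ R i a) (hcard : ∀ i a, 3 ≤ (R i a).card)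
    (hpot : IsPotential A U R φ)
    (hκ : 1 / ((Cmax A R : ℝ) - 1) < κ ∧ κ ≤ 1 / 2)
    (a0 a1 : ∀ i, A i) (hz : InB A R (a0, a1)) (hne : a0 ≠ a1) :
    (∀ S : Set ((∀ i, A i) × (∀ i, A i)),
        IsRecurrentClass A U R 0 κ S → (a0, a1) ∉ S) ∧
    (∃ l : List ((∀ i, A i) × (∀ i, A i)),
      l.head? = some (a0, a1) ∧
      l.Chain' (fun x y => 0 < transP A U R 0 κ x y) ∧
      (∃ a : ∀ i, A i, l.getLast? = some (a, a)) ∧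
      (a0, a1) ∉ l.tail) := by
  obtain ⟨t, a, hc, hl, hacc, ht⟩ := exists_path_to_diag A U R κ (a0, a1)
  refine ⟨?_, (a0, a1) :: t, rfl, hc, ⟨a, hl⟩, fun hmem => lt_irrefl _ (ht _ hmem)⟩
  rintro S ⟨-, -, hcomm, hclosed⟩ hS
  have haS : (a, a) ∈ S := hclosed _ hS _ hacc
  have heq := eq_of_accessible_diag A U R κ a _ (hcomm _ haS _ hS)
  rw [Prod.mk.injEq] at heq
  exact hne (heq.1.trans heq.2.symm)
end

section
/- Consider PHPIP applied to a constrained potential game Γ with potential φ satisfying Assumption 2. Let r be an m-straight-route from z⁰ = (a⁰,a⁰) ∈ diag(A) to z¹ = (a¹,a¹) ∈ diag(A) passing through diagonal states z^{(0)} = z⁰, z^{(1)}, …, z^{(m-1)} = z¹, and let r' be the reverse m-straight-route from z¹ to z⁰ through the same diagonal states in reverse order. Then λ(r) = λ(r') + φ(a⁰) − φ(a¹); in particular, if φ(a⁰) > φ(a¹) then λ(r) > λ(r'). -/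
/-!
Write `f ≍ ε ^ e` when `f ε / ε ^ e` has a positive limit as `ε → 0+`. Such an exponent is
additive under products (`HasOrder.mul`, `HasOrder.prod`) and unique (`HasOrder.unique`).

Along a straight route `(a,a) → (a,b) → (b,b)` in which agent `i` moves, the first step has
exponent `1` (agent `i` explores, everybody else stays put with probability `1 - ε`). In the second
step every agent other than `i` keeps its action with probability `1 - ε`, whether or not its
utility dropped, because its two remembered actions coincide; agent `i` keeps `b i` with probability
of exponent `max 0 (U i a - U i b) = max 0 (φ a - φ b)`. So the route costs
`1 + max 0 (φ a - φ b)`, and the same computation for the reversed edge gives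
`1 + max 0 (φ b - φ a)`. The difference is `φ a - φ b`, which telescopes along the list.
-/

open Finset Filter Topology
open scoped Classical

namespace PIPIPGame

/-- The route in `B` obtained by concatenating the straight routes joining the
consecutive diagonal states `(a,a)` for `a` in the given list; for
`[a⁰, a¹, …, a^{m-1}]` it is `(a⁰,a⁰), (a⁰,a¹), (a¹,a¹), (a¹,a²), (a²,a²), …`. -/
def expandRoute {n : ℕ} {A : Fin n → Type} :
    List (∀ i, A i) → List ((∀ i, A i) × (∀ i, A i))
  | [] => []
  | [a] => [(a, a)]
  | a :: b :: rest => (a, a) :: (a, b) :: expandRoute (b :: rest)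

end PIPIPGame

open PIPIPGame Finset Filter Topology

namespace PIPIPGame

/-! ### Exact orders as `ε → 0+` -/

/-- `f ε` is of exact order `ε ^ e` as `ε → 0+`. -/
def HasOrder (f : ℝ → ℝ) (e : ℝ) : Prop :=
  ∃ L : ℝ, 0 < L ∧ Tendsto (fun ε : ℝ => f ε / ε ^ e) (𝓝[>] (0 : ℝ)) (𝓝 L)

lemma HasOrder.mul {f g : ℝ → ℝ} {e d : ℝ} (hf : HasOrder f e) (hg : HasOrder g d) :
    HasOrder (fun ε => f ε * g ε) (e + d) := by
  obtain ⟨L, hL, hf⟩ := hf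
  obtain ⟨M, hM, hg⟩ := hg
  refine ⟨L * M, mul_pos hL hM, (hf.mul hg).congr' ?_⟩
  filter_upwards [self_mem_nhdsWithin] with ε (hε : 0 < ε)
  rw [Real.rpow_add hε, div_mul_div_comm]

lemma HasOrder.congr' {f g : ℝ → ℝ} {e : ℝ} (hf : HasOrder f e)
    (h : ∀ ε, 0 < ε → f ε = g ε) : HasOrder g e := by
  obtain ⟨L, hL, hf⟩ := hf
  refine ⟨L, hL, hf.congr' ?_⟩
  filter_upwards [self_mem_nhdsWithin] with ε (hε : 0 < ε)
  rw [h ε hε]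

lemma hasOrder_rpow (e : ℝ) : HasOrder (fun ε => ε ^ e) e := by
  refine ⟨1, one_pos, tendsto_const_nhds.congr' ?_⟩
  filter_upwards [self_mem_nhdsWithin] with ε (hε : 0 < ε)
  rw [div_self (Real.rpow_pos_of_pos hε e).ne']

lemma hasOrder_const {c : ℝ} (hc : 0 < c) : HasOrder (fun _ => c) 0 :=
  ⟨c, hc, by simp⟩

lemma hasOrder_one_sub : HasOrder (fun ε => 1 - ε) 0 := by
  refine ⟨1, one_pos, ?_⟩
  have h : Tendsto (fun ε : ℝ => 1 - ε) (𝓝 0) (𝓝 (1 - 0)) := by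
    exact (continuous_const.sub continuous_id).tendsto 0
  simpa using h.mono_left (nhdsWithin_le_nhds (s := Set.Ioi (0 : ℝ)))

lemma hasOrder_id_div {c : ℝ} (hc : 0 < c) : HasOrder (fun ε => ε / c) 1 := by
  have h := (hasOrder_rpow 1).mul (hasOrder_const (inv_pos.2 hc))
  rw [add_zero] at h
  exact h.congr' fun ε _ => by rw [Real.rpow_one, div_eq_mul_inv]

lemma HasOrder.prod {ι : Type*} (s : Finset ι) {f : ι → ℝ → ℝ} {e : ι → ℝ}
    (h : ∀ i ∈ s, HasOrder (f i) (e i)) :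
    HasOrder (fun ε => ∏ i ∈ s, f i ε) (∑ i ∈ s, e i) := by
  classical
  induction s using Finset.induction_on with
  | empty => simpa using hasOrder_const one_pos
  | insert a s ha ih =>
    simp only [Finset.prod_insert ha, Finset.sum_insert ha]
    exact (h a (Finset.mem_insert_self a s)).mul
      (ih fun i hi => h i (Finset.mem_insert_of_mem hi))

lemma HasOrder.le {f : ℝ → ℝ} {e d : ℝ} (he : HasOrder f e) (hd : HasOrder f d) : e ≤ d := by
  by_contra! hlt
  obtain ⟨L, hL, he⟩ := he
  obtain ⟨M, hM, hd⟩ := hd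
  -- `f / ε ^ d = (f / ε ^ e) * ε ^ (e - d)` tends to `0` when `d < e`.
  have h0 : Tendsto (fun ε : ℝ => ε ^ (e - d)) (𝓝[>] 0) (𝓝 0) := by
    have := (Real.continuousAt_rpow_const 0 (e - d) (Or.inr (by linarith))).tendsto
    rw [Real.zero_rpow (by linarith)] at this
    exact this.mono_left nhdsWithin_le_nhds
  have h1 : Tendsto (fun ε : ℝ => f ε / ε ^ d) (𝓝[>] 0) (𝓝 (L * 0)) := by
    refine (he.mul h0).congr' ?_
    filter_upwards [self_mem_nhdsWithin] with ε (hε : 0 < ε)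
    have h2 := (Real.rpow_pos_of_pos hε e).ne'
    have h3 := (Real.rpow_pos_of_pos hε d).ne'
    rw [Real.rpow_sub hε]
    field_simp
  have := tendsto_nhds_unique hd h1
  linarith

lemma HasOrder.unique {f : ℝ → ℝ} {e d : ℝ} (he : HasOrder f e) (hd : HasOrder f d) : e = d :=
  le_antisymm (he.le hd) (hd.le he)

/-! ### The PHPIP chain along straight routes -/

section Game

set_option linter.unusedSectionVars false

variable {n : ℕ} {A : Fin n → Type} [∀ i, Fintype (A i)] [∀ i, DecidableEq (A i)]
  {U : Fin n → (∀ i, A i) → ℝ} {R : ∀ i, A i → Finset (A i)} {φ : (∀ i, A i) → ℝ} {κ : ℝ}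

/-- Feasible sets of size at least `3` make the lower bound on `κ` positive. The given `i` and `a`
are needed: without agents `Cmax` is `0` and the bound is negative. -/
lemma kappa_pos (hcard : ∀ (i : Fin n) (a : A i), 3 ≤ (R i a).card)
    (hκ : 1 / ((Cmax A R : ℝ) - 1) < κ) (i : Fin n) (a : A i) : 0 < κ := by
  have hC : 3 ≤ Cmax A R := (hcard i a).trans <|
    (Finset.le_sup (f := fun a : A i => (R i a).card) (Finset.mem_univ a)).trans <|
    Finset.le_sup (f := fun i : Fin n => Finset.univ.sup fun a : A i => (R i a).card)
      (Finset.mem_univ i)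
  have hC' : (3 : ℝ) ≤ Cmax A R := by exact_mod_cast hC
  exact lt_trans (one_div_pos.2 (by linarith)) hκ

/-- An agent whose two remembered actions agree repeats that action with probability `1 - ε`,
even after a drop in utility. -/
lemma agentProb_stay (ε κ : ℝ) (a b : ∀ j, A j) (j : Fin n) (h : b j = a j) :
    agentProb A U R ε κ a b j (b j) = 1 - ε := by
  unfold agentProb
  split_ifs <;> simp_all
  ring

lemma agentProb_explore (ε κ : ℝ) (a b : ∀ j, A j) (i : Fin n) (hne : b i ≠ a i)
    (hb : b i ∈ R i (a i)) :
    agentProb A U R ε κ a a i (b i) = ε / ((R i (a i) \ {a i}).card : ℝ) := by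
  unfold agentProb
  simp [hne, hb]

lemma agentProb_keep_good (ε κ : ℝ) (a b : ∀ j, A j) (i : Fin n) (h : U i a ≤ U i b) :
    agentProb A U R ε κ a b i (b i) = 1 - ε := by
  unfold agentProb
  simp [h]

lemma agentProb_keep_bad (ε κ : ℝ) (a b : ∀ j, A j) (i : Fin n) (hne : b i ≠ a i)
    (h : ¬ U i a ≤ U i b) :
    agentProb A U R ε κ a b i (b i) = (1 - ε) * (κ * ε ^ (U i a - U i b)) := by
  unfold agentProb
  simp [h, hne]

/-- The exploration step `(a,a) → (a,b)`, in which only agent `i` moves, has exponent `1`. -/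
lemma hasOrder_first (κ : ℝ) {a b : ∀ j, A j} {i : Fin n} (hne : b i ≠ a i)
    (hb : b i ∈ R i (a i)) (hother : ∀ j, j ≠ i → b j = a j) :
    HasOrder (fun ε => transP A U R ε κ (a, a) (a, b)) 1 := by
  have key : HasOrder (fun ε => ∏ j, agentProb A U R ε κ a a j (b j))
      (∑ j : Fin n, if j = i then (1 : ℝ) else 0) := by
    refine HasOrder.prod _ fun j _ => ?_
    by_cases hj : j = i
    · subst hj
      rw [if_pos rfl]
      refine (hasOrder_id_div (c := ((R j (a j) \ {a j}).card : ℝ)) ?_).congr'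
        fun ε _ => (agentProb_explore ε κ a b j hne hb).symm
      exact_mod_cast Finset.card_pos.2 ⟨b j, by simp [hb, hne]⟩
    · rw [if_neg hj]
      refine hasOrder_one_sub.congr' fun ε _ => ?_
      rw [hother j hj]
      exact (agentProb_stay ε κ a a j rfl).symm
  simpa [transP] using key

/-- The confirmation step `(a,b) → (b,b)` has as exponent the drop in utility of the agent that
moved; utility drops of the other agents cost nothing. -/
lemma hasOrder_second (hκ : 0 < κ) {a b : ∀ j, A j} {i : Fin n} (hne : b i ≠ a i)
    (hother : ∀ j, j ≠ i → b j = a j) :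
    HasOrder (fun ε => transP A U R ε κ (a, b) (b, b)) (max 0 (U i a - U i b)) := by
  have key : HasOrder (fun ε => ∏ j, agentProb A U R ε κ a b j (b j))
      (∑ j : Fin n, if j = i then max 0 (U i a - U i b) else 0) := by
    refine HasOrder.prod _ fun j _ => ?_
    by_cases hj : j = i
    · subst hj
      rw [if_pos rfl]
      by_cases h : U j a ≤ U j b
      · rw [max_eq_left (by linarith)]
        exact hasOrder_one_sub.congr' fun ε _ => (agentProb_keep_good ε κ a b j h).symm
      · rw [max_eq_right (by linarith)]
        have := hasOrder_one_sub.mul ((hasOrder_const hκ).mul (hasOrder_rpow (U j a - U j b)))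
        rw [zero_add, zero_add] at this
        exact this.congr' fun ε _ => (agentProb_keep_bad ε κ a b j hne h).symm
    · rw [if_neg hj]
      exact hasOrder_one_sub.congr' fun ε _ => (agentProb_stay ε κ a b j (hother j hj)).symm
  simpa [transP] using key

/-- The resistance of the route through the diagonal states of a list: each straight route from
`a` to `b` contributes `1 + max 0 (φ a - φ b)`. -/
noncomputable def routeCost (φ : (∀ i, A i) → ℝ) : List (∀ i, A i) → ℝ
  | [] => 0
  | [_] => 0
  | a :: b :: rest => (1 + max 0 (φ a - φ b)) + routeCost φ (b :: rest)

lemma routeCost_append (φ : (∀ i, A i) → ℝ) (a b : ∀ i, A i) :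
    ∀ l : List (∀ i, A i),
      routeCost φ (l ++ [b, a]) = routeCost φ (l ++ [b]) + (1 + max 0 (φ b - φ a))
  | [] => by simp [routeCost]
  | [c] => by simp [routeCost]
  | c :: d :: l => by
    have := routeCost_append φ a b (d :: l)
    simp only [List.cons_append, routeCost] at this ⊢
    linarith

/-- Reversing a route changes its cost by the potential difference of its endpoints. -/
lemma routeCost_reverse (φ : (∀ i, A i) → ℝ) (a1 : ∀ i, A i) :
    ∀ (l : List (∀ i, A i)) (a0 : ∀ i, A i), (a0 :: l).getLast? = some a1 →
      routeCost φ (a0 :: l) = routeCost φ (a0 :: l).reverse + φ a0 - φ a1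
  | [], a0, h => by
    obtain rfl : a0 = a1 := by simpa using h
    simp [routeCost]
  | b :: l, a0, h => by
    have ih := routeCost_reverse φ a1 l b (by simpa using h)
    have happ := routeCost_append φ a0 b l.reverse
    simp only [List.reverse_cons, List.append_assoc, List.cons_append, List.nil_append] at ih ⊢
    rw [happ]
    simp only [routeCost]
    have hmax : max 0 (φ a0 - φ b) = max 0 (φ b - φ a0) + (φ a0 - φ b) := by
      rcases le_total (φ a0) (φ b) with h | h
      · rw [max_eq_left (by linarith), max_eq_right (by linarith)]; ring
      · rw [max_eq_right (by linarith), max_eq_left (by linarith)]; ring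
    linarith

lemma pathProb_cons_cons (ε κ : ℝ) (a b : ∀ i, A i) (l : List (∀ i, A i)) :
    pathProb A U R ε κ (expandRoute (a :: b :: l)) =
      transP A U R ε κ (a, a) (a, b) * transP A U R ε κ (a, b) (b, b) *
        pathProb A U R ε κ (expandRoute (b :: l)) := by
  cases l <;> simp [expandRoute, pathProb, mul_assoc]

lemma hasOrder_route (hcard : ∀ (i : Fin n) (a : A i), 3 ≤ (R i a).card)
    (hκ : 1 / ((Cmax A R : ℝ) - 1) < κ) (hpot : IsPotential A U R φ) :
    ∀ l : List (∀ i, A i), l.IsChain (ESingle A R) →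
      HasOrder (fun ε => pathProb A U R ε κ (expandRoute l)) (routeCost φ l)
  | [], _ => by simpa [expandRoute, pathProb, routeCost] using hasOrder_const one_pos
  | [a], _ => by simpa [expandRoute, pathProb, routeCost] using hasOrder_const one_pos
  | a :: b :: l, h => by
    rw [List.isChain_cons_cons] at h
    have ih := hasOrder_route hcard hκ hpot (b :: l) h.2
    obtain ⟨i, hne, hb, hother⟩ := h.1
    have hU : U i a - U i b = φ a - φ b := by
      have := hpot i a b hb hother
      linarith
    have h2 := hasOrder_second (U := U) (R := R) (kappa_pos hcard hκ i (a i)) hne hother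
    rw [hU] at h2
    exact (((hasOrder_first (U := U) κ hne hb hother).mul h2).mul ih).congr'
      fun ε _ => (pathProb_cons_cons ε κ a b l).symm

lemma ESingle.symm (hrev : ∀ (i : Fin n) (a b : A i), b ∈ R i a ↔ a ∈ R i b)
    {a b : ∀ j, A j} (h : ESingle A R a b) : ESingle A R b a := by
  obtain ⟨i, hne, hb, hother⟩ := h
  exact ⟨i, hne.symm, (hrev i _ _).1 hb, fun j hj => (hother j hj).symm⟩

end Game

end PIPIPGame

/-- **Lemma 4.** Let `r` be an `m`-straight-route from `z⁰ = (a⁰,a⁰)` to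
`z¹ = (a¹,a¹)` through diagonal states determined by the list `as`, and let `r'` be
its reverse. If `λ(r)`, `λ(r')` are their resistances, then
`λ(r) = λ(r') + φ(a⁰) − φ(a¹)`; in particular `φ(a⁰) > φ(a¹)` implies
`λ(r) > λ(r')`. -/
theorem straight_route_resistance_reverse
    {n : ℕ} (A : Fin n → Type) [∀ i, Fintype (A i)] [∀ i, DecidableEq (A i)]
    (U : Fin n → (∀ i, A i) → ℝ) (R : ∀ i, A i → Finset (A i))
    (φ : (∀ i, A i) → ℝ) (κ : ℝ)
    (hrefl : ∀ i a, a ∈ R i a)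
    (h1 : Assumption1 A R) (h2 : Assumption2 A U R)
    (hpot : IsPotential A U R φ)
    (hκ : 1 / ((Cmax A R : ℝ) - 1) < κ ∧ κ ≤ 1 / 2)
    (as : List (∀ i, A i)) (a0 a1 : ∀ i, A i)
    (hhead : as.head? = some a0) (hlast : as.getLast? = some a1)
    (hchain : as.Chain' (ESingle A R))
    (lam lam' : ℝ)
    (hr : HasResistance A U R κ (expandRoute as) lam)
    (hr' : HasResistance A U R κ (expandRoute as.reverse) lam') :
    lam = lam' + φ a0 - φ a1 ∧ (φ a1 < φ a0 → lam' < lam) := by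
  obtain ⟨-, hlim⟩ := hr
  obtain ⟨-, hlim'⟩ := hr'
  have hrevchain : as.reverse.IsChain (ESingle A R) :=
    List.isChain_reverse.2 (List.IsChain.imp (fun _ _ h => ESingle.symm h1.1 h) hchain)
  have e1 : lam = routeCost φ as :=
    HasOrder.unique hlim (hasOrder_route h1.2.2 hκ.1 hpot as hchain)
  have e2 : lam' = routeCost φ as.reverse :=
    HasOrder.unique hlim' (hasOrder_route h1.2.2 hκ.1 hpot as.reverse hrevchain)
  have key : lam = lam' + φ a0 - φ a1 := by
    cases as with
    | nil => simp at hhead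
    | cons a l =>
      obtain rfl : a = a0 := by simpa using hhead
      rw [e1, e2]
      exact routeCost_reverse φ a1 l a hlast
  exact ⟨key, fun h => by linarith⟩
end
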